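/- arXiv:2603.02426 — 3 statements merged into one kernel-verified Lean document; each statement's English description precedes it below -/
import Mathlib

section
/- Let d, r, K be positive integers with d ≥ 2r. Let B, B* ∈ ℝ^{d×r} have orthonormal columns and let B*_⊥ ∈ ℝ^{d×(d−r)} be an orthonormal complement of B*. For k = 1,…,K let ω^k, ω^{*,k} ∈ ℝ^r, set z^k := B* ω^{*,k} and x^k := B ω^k − z^k, and let Z ∈ ℝ^{d×K} be the matrix whose k-th column is z^k. Assume the vectors z^1,…,z^K span the column space of B* (equivalently, rank Z = r). Then (1/K) Σ_{k=1}^K ‖x^k‖² ≥ (‖B*_⊥ᵀ B‖² / K) · λ⁺_min(Z Zᵀ), where λ⁺_min(Z Zᵀ) denotes the smallest nonzero eigenvalue of the positive semidefinite matrix Z Zᵀ and ‖B*_⊥ᵀ B‖ is the spectral norm. -/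
open Matrix BigOperators

/-- Spectral norm (largest singular value) of a real matrix, as the operator
norm of the induced linear map between Euclidean spaces. -/
noncomputable def specNorm {m n : ℕ} (A : Matrix (Fin m) (Fin n) ℝ) : ℝ :=
  ‖LinearMap.toContinuousLinearMap (Matrix.toEuclideanLin A)‖

/-!
In the Frobenius norm the squared errors `‖x k‖²` add up to `‖B * Ω - B⋆ * W‖²`, where the columns
of `Ω` and `W` are the estimated and true heads and `Z = B⋆ * W`. The projection `1 - B * Bᵀ` is a
contraction and kills `B * Ω`, so this is at least `‖(1 - B * Bᵀ) * B⋆ * W‖²`. Since `Z` has rank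
`r`, `W * Wᵀ` is invertible; its eigenvalues are thus nonzero eigenvalues of `Z * Zᵀ`, whence
`lam • 1 ≤ W * Wᵀ` in the Loewner order and the bound becomes `lam * ‖(1 - B * Bᵀ) * B⋆‖²`. Two
subspaces of equal dimension have the same principal angles seen from either side, so
`‖(1 - B * Bᵀ) * B⋆‖ = ‖B⋆_⊥ᵀ * B‖`, and the Frobenius norm dominates the spectral norm.
-/

section Eigenvalues

theorem hasEigenvalue_toLin'_mul_mul_of_mul_eq_one {R m n : Type*} [CommRing R]
    [Fintype m] [DecidableEq m] [Fintype n] [DecidableEq n]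
    {P : Matrix n m R} {Q : Matrix m n R} (hPQ : P * Q = 1) {A : Matrix n n R} {μ : R}
    (hμ : Module.End.HasEigenvalue (toLin' A) μ) :
    Module.End.HasEigenvalue (toLin' (Q * A * P)) μ := by
  obtain ⟨v, hv⟩ := hμ.exists_hasEigenvector
  have hPQv : P *ᵥ (Q *ᵥ v) = v := by rw [mulVec_mulVec, hPQ, one_mulVec]
  refine Module.End.hasEigenvalue_of_hasEigenvector (x := Q *ᵥ v)
    ⟨Module.End.mem_eigenspace_iff.2 ?_, fun hQv => hv.2 ?_⟩
  · rw [toLin'_apply, ← mulVec_mulVec, hPQv, ← mulVec_mulVec, ← toLin'_apply A, hv.apply_eq_smul,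
      mulVec_smul]
  · rw [← hPQv, hQv, mulVec_zero]

theorem isUnit_of_rank_eq_card {F n : Type*} [Field F] [Fintype n] [DecidableEq n]
    {A : Matrix n n F} (hA : A.rank = Fintype.card n) : IsUnit A := by
  rw [← mulVec_surjective_iff_isUnit, ← coe_mulVecLin, ← LinearMap.range_eq_top]
  exact Submodule.eq_top_of_finrank_eq (hA.trans (Module.finrank_fintype_fun_eq_card F).symm)

open scoped ComplexOrder MatrixOrder

variable {𝕜 m n k : Type*} [RCLike 𝕜] [Fintype m] [DecidableEq m] [Fintype n] [Fintype k]

theorem nonneg_of_hasEigenvalue_mul_conjTranspose_self {A : Matrix m n 𝕜} {μ : ℝ}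
    (hμ : Module.End.HasEigenvalue (toLin' (A * Aᴴ)) (μ : 𝕜)) : 0 ≤ μ := by
  have hmem := hμ.mem_spectrum
  rw [spectrum_toLin'] at hmem
  exact spectrum_nonneg_of_nonneg (posSemidef_self_mul_conjTranspose A).nonneg
    ((spectrum.algebraMap_mem_iff 𝕜).1 hmem)

variable [DecidableEq n]

theorem algebraMap_le_mul_conjTranspose_self_of_rank_eq_card {A : Matrix n k 𝕜}
    (hA : A.rank = Fintype.card n) {c : ℝ}
    (hc : ∀ μ : ℝ, μ ≠ 0 → Module.End.HasEigenvalue (toLin' (A * Aᴴ)) (μ : 𝕜) → c ≤ μ) :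
    algebraMap ℝ _ c ≤ A * Aᴴ := by
  have hunit : IsUnit (A * Aᴴ) := isUnit_of_rank_eq_card (by rwa [rank_self_mul_conjTranspose])
  rw [algebraMap_le_iff_le_spectrum (ha := isHermitian_mul_conjTranspose_self A)]
  intro μ hμ
  refine hc μ (fun h0 => (spectrum.zero_notMem_iff ℝ).2 hunit (h0 ▸ hμ)) ?_
  rw [Module.End.hasEigenvalue_iff_mem_spectrum, spectrum_toLin']
  exact (spectrum.algebraMap_mem_iff 𝕜).2 hμ

theorem algebraMap_le_mul_conjTranspose_self_of_orthonormal_mul {S : Matrix m n 𝕜}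
    (hS : Sᴴ * S = 1) {W : Matrix n k 𝕜} (hrank : (S * W).rank = Fintype.card n) {c : ℝ}
    (hc : ∀ μ : ℝ, μ ≠ 0 →
      Module.End.HasEigenvalue (toLin' ((S * W) * (S * W)ᴴ)) (μ : 𝕜) → c ≤ μ) :
    algebraMap ℝ _ c ≤ W * Wᴴ := by
  have hW : W.rank = Fintype.card n :=
    W.rank_le_card_height.antisymm (hrank ▸ rank_mul_le_right S W)
  refine algebraMap_le_mul_conjTranspose_self_of_rank_eq_card hW fun μ hμ0 hμ => hc μ hμ0 ?_
  have hSW : (S * W) * (S * W)ᴴ = S * (W * Wᴴ) * Sᴴ := by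
    simp only [conjTranspose_mul, Matrix.mul_assoc]
  exact hSW ▸ hasEigenvalue_toLin'_mul_mul_of_mul_eq_one hS hμ

end Eigenvalues

section Frobenius

open scoped Matrix.Norms.Frobenius ComplexOrder MatrixOrder

variable {𝕜 d r s t k : Type*} [RCLike 𝕜] [Fintype d] [Fintype r] [Fintype s] [Fintype t]
  [Fintype k]

theorem frobenius_norm_sq (A : Matrix d r 𝕜) : ‖A‖ ^ 2 = ∑ i, ∑ j, ‖A i j‖ ^ 2 := by
  rw [frobenius_norm_def, ← Real.rpow_natCast, ← Real.rpow_mul (by positivity)]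
  norm_num

theorem trace_conjTranspose_mul_self (A : Matrix d r 𝕜) :
    (Aᴴ * A).trace = ((‖A‖ ^ 2 : ℝ) : 𝕜) := by
  rw [frobenius_norm_sq, Finset.sum_comm]
  simp [trace, mul_apply, RCLike.conj_mul]

theorem trace_mul_conjTranspose_self (A : Matrix d r 𝕜) :
    (A * Aᴴ).trace = ((‖A‖ ^ 2 : ℝ) : 𝕜) := by
  rw [trace_mul_comm, trace_conjTranspose_mul_self]

theorem specNorm_le_frobenius_norm {m n : ℕ} (A : Matrix (Fin m) (Fin n) ℝ) :
    specNorm A ≤ ‖A‖ := by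
  refine ContinuousLinearMap.opNorm_le_bound _ (norm_nonneg _) fun v => ?_
  calc ‖toEuclideanLin A v‖ = ‖A * replicateCol Unit v.ofLp‖ := by
        rw [← replicateCol_mulVec, frobenius_norm_replicateCol, toLpLin_apply]
    _ ≤ ‖A‖ * ‖v‖ := by
        simpa only [frobenius_norm_replicateCol, WithLp.toLp_ofLp] using
          frobenius_norm_mul A (replicateCol Unit v.ofLp)

variable [DecidableEq r]

theorem frobenius_norm_sq_of_orthonormal {B : Matrix d r 𝕜} (hB : Bᴴ * B = 1) :
    ‖B‖ ^ 2 = Fintype.card r := by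
  have htr := trace_conjTranspose_mul_self B
  rw [hB, trace_one] at htr
  exact_mod_cast htr.symm

theorem mul_frobenius_norm_sq_le_of_algebraMap_le {W : Matrix r k 𝕜} {c : ℝ}
    (h : algebraMap ℝ _ c ≤ W * Wᴴ) (N : Matrix d r 𝕜) : c * ‖N‖ ^ 2 ≤ ‖N * W‖ ^ 2 := by
  have hconj : N * (W * Wᴴ - algebraMap ℝ _ c) * Nᴴ = N * W * (N * W)ᴴ - c • (N * Nᴴ) := by
    simp only [Algebra.algebraMap_eq_smul_one, conjTranspose_mul, Matrix.mul_sub, Matrix.sub_mul,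
      Matrix.mul_smul, Matrix.smul_mul, Matrix.mul_one, Matrix.mul_assoc]
  have htr := ((le_iff.1 h).mul_mul_conjTranspose_same N).trace_nonneg
  rw [hconj, trace_sub, trace_smul, trace_mul_conjTranspose_self, trace_mul_conjTranspose_self,
    RCLike.real_smul_eq_coe_mul] at htr
  exact sub_nonneg.1 (by exact_mod_cast htr)

variable [DecidableEq d]

theorem frobenius_norm_sq_conjTranspose_mul_add {S : Matrix d s 𝕜} {T : Matrix d t 𝕜}
    (hST : S * Sᴴ + T * Tᴴ = 1) (X : Matrix d k 𝕜) :
    ‖Sᴴ * X‖ ^ 2 + ‖Tᴴ * X‖ ^ 2 = ‖X‖ ^ 2 := by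
  have hX : (Sᴴ * X)ᴴ * (Sᴴ * X) + (Tᴴ * X)ᴴ * (Tᴴ * X) = Xᴴ * X := by
    calc _ = Xᴴ * (S * Sᴴ + T * Tᴴ) * X := by
          simp only [conjTranspose_mul, conjTranspose_conjTranspose, Matrix.mul_add, Matrix.add_mul,
            Matrix.mul_assoc]
      _ = Xᴴ * X := by rw [hST, Matrix.mul_one]
  have htr := congrArg trace hX
  simp only [trace_add, trace_conjTranspose_mul_self] at htr
  exact_mod_cast htr

theorem one_sub_mul_conjTranspose_mul_self {B : Matrix d r 𝕜} (hB : Bᴴ * B = 1) :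
    (1 - B * Bᴴ) * B = 0 := by
  rw [Matrix.sub_mul, Matrix.mul_assoc, hB, Matrix.one_mul, Matrix.mul_one, sub_self]

theorem frobenius_norm_sq_conjTranspose_mul_add_one_sub {B : Matrix d r 𝕜} (hB : Bᴴ * B = 1)
    (X : Matrix d k 𝕜) :
    ‖Bᴴ * X‖ ^ 2 + ‖(1 - B * Bᴴ) * X‖ ^ 2 = ‖X‖ ^ 2 := by
  have hself : (1 - B * Bᴴ)ᴴ = 1 - B * Bᴴ := by simp
  have hcompl : B * Bᴴ + (1 - B * Bᴴ) * (1 - B * Bᴴ)ᴴ = 1 := by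
    rw [hself, Matrix.mul_sub, ← Matrix.mul_assoc, one_sub_mul_conjTranspose_mul_self hB,
      Matrix.zero_mul, Matrix.mul_one, sub_zero, add_sub_cancel]
  simpa only [hself] using frobenius_norm_sq_conjTranspose_mul_add hcompl X

theorem frobenius_norm_sq_complement_mul_eq {B S : Matrix d r 𝕜} {T : Matrix d s 𝕜}
    (hB : Bᴴ * B = 1) (hS : Sᴴ * S = 1) (hST : S * Sᴴ + T * Tᴴ = 1) :
    ‖Tᴴ * B‖ ^ 2 = ‖(1 - B * Bᴴ) * S‖ ^ 2 := by
  have hcos : ‖Sᴴ * B‖ = ‖Bᴴ * S‖ := by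
    rw [← frobenius_norm_conjTranspose, conjTranspose_mul, conjTranspose_conjTranspose]
  have hsplitB := frobenius_norm_sq_conjTranspose_mul_add hST B
  have hsplitS := frobenius_norm_sq_conjTranspose_mul_add_one_sub hB S
  rw [frobenius_norm_sq_of_orthonormal hB, hcos] at hsplitB
  rw [frobenius_norm_sq_of_orthonormal hS] at hsplitS
  linarith

theorem frobenius_norm_sq_one_sub_mul_le {B : Matrix d r 𝕜} (hB : Bᴴ * B = 1)
    (Ω : Matrix r k 𝕜) (Z : Matrix d k 𝕜) :
    ‖(1 - B * Bᴴ) * Z‖ ^ 2 ≤ ‖B * Ω - Z‖ ^ 2 := by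
  have hres : (1 - B * Bᴴ) * (B * Ω - Z) = -((1 - B * Bᴴ) * Z) := by
    rw [Matrix.mul_sub, ← Matrix.mul_assoc, one_sub_mul_conjTranspose_mul_self hB, Matrix.zero_mul,
      zero_sub]
  rw [← norm_neg, ← hres, ← frobenius_norm_sq_conjTranspose_mul_add_one_sub hB (B * Ω - Z)]
  exact le_add_of_nonneg_left (sq_nonneg _)

theorem frobenius_norm_sq_complement_mul_mul_le {B S : Matrix d r 𝕜} {T : Matrix d s 𝕜}
    (hB : Bᴴ * B = 1) (hS : Sᴴ * S = 1) (hST : S * Sᴴ + T * Tᴴ = 1) (Ω : Matrix r k 𝕜)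
    {W : Matrix r k 𝕜} (hrank : (S * W).rank = Fintype.card r) {c : ℝ}
    (hc : ∀ μ : ℝ, μ ≠ 0 →
      Module.End.HasEigenvalue (toLin' ((S * W) * (S * W)ᴴ)) (μ : 𝕜) → c ≤ μ) :
    ‖Tᴴ * B‖ ^ 2 * c ≤ ‖B * Ω - S * W‖ ^ 2 :=
  calc ‖Tᴴ * B‖ ^ 2 * c = c * ‖(1 - B * Bᴴ) * S‖ ^ 2 := by
        rw [frobenius_norm_sq_complement_mul_eq hB hS hST, mul_comm]
    _ ≤ ‖(1 - B * Bᴴ) * S * W‖ ^ 2 :=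
        mul_frobenius_norm_sq_le_of_algebraMap_le
          (algebraMap_le_mul_conjTranspose_self_of_orthonormal_mul hS hrank hc) _
    _ = ‖(1 - B * Bᴴ) * (S * W)‖ ^ 2 := by rw [Matrix.mul_assoc]
    _ ≤ ‖B * Ω - S * W‖ ^ 2 := frobenius_norm_sq_one_sub_mul_le hB Ω _

theorem local_head_lower_bound_spectral_general {B Bstar : Matrix d r 𝕜} {Bperp : Matrix d s 𝕜}
    (hB : Bᴴ * B = 1) (hBstar : Bstarᴴ * Bstar = 1)
    (hcomp : Bstar * Bstarᴴ + Bperp * Bperpᴴ = 1)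
    {ω ωstar : k → r → 𝕜} {z x : k → d → 𝕜}
    (hz : ∀ j, z j = Bstar *ᵥ ωstar j) (hx : ∀ j, x j = B *ᵥ ω j - z j)
    {Z : Matrix d k 𝕜} (hZ : ∀ i j, Z i j = z j i) (hrank : Z.rank = Fintype.card r)
    {lam : ℝ}
    (hlam : ∀ μ : ℝ, μ ≠ 0 → Module.End.HasEigenvalue (toLin' (Z * Zᴴ)) (μ : 𝕜) → lam ≤ μ) :
    ‖Bperpᴴ * B‖ ^ 2 * lam ≤ ∑ j, ∑ i, ‖x j i‖ ^ 2 := by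
  obtain rfl : Z = Bstar * (of ωstar)ᵀ := by
    ext i j
    rw [hZ, hz]
    rfl
  have hX : B * (of ω)ᵀ - Bstar * (of ωstar)ᵀ = (of x)ᵀ := by
    ext i j
    rw [Matrix.sub_apply, hZ, transpose_apply, of_apply, hx]
    rfl
  have hsum : ‖(of x)ᵀ‖ ^ 2 = ∑ j, ∑ i, ‖x j i‖ ^ 2 := by
    rw [frobenius_norm_transpose, frobenius_norm_sq]
    rfl
  rw [← hsum, ← hX]
  exact frobenius_norm_sq_complement_mul_mul_le hB hBstar hcomp _ hrank hlam

end Frobenius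

/-- Lower bound of local head errors (spectral norm version):
(1/K) Σ_k ‖x^k‖² ≥ (‖B*_⊥ᵀ B‖² / K) · λ⁺_min(Z Zᵀ). -/
theorem local_head_lower_bound_spectral
    (d r K : ℕ) (hd : 0 < d) (hr : 0 < r) (hK : 0 < K) (hdr : 2 * r ≤ d)
    (B Bstar : Matrix (Fin d) (Fin r) ℝ) (Bperp : Matrix (Fin d) (Fin (d - r)) ℝ)
    (hB : Bᵀ * B = 1) (hBstar : Bstarᵀ * Bstar = 1)
    (hBperp : Bperpᵀ * Bperp = 1) (horth : Bstarᵀ * Bperp = 0)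
    (hcomp : Bstar * Bstarᵀ + Bperp * Bperpᵀ = 1)
    (ω ωstar : Fin K → Fin r → ℝ)
    (z x : Fin K → Fin d → ℝ)
    (hz : ∀ k, z k = Bstar.mulVec (ωstar k))
    (hx : ∀ k, x k = B.mulVec (ω k) - z k)
    (Z : Matrix (Fin d) (Fin K) ℝ) (hZ : ∀ i k, Z i k = z k i)
    (hrank : Z.rank = r)
    -- `lam` is the smallest nonzero eigenvalue of the PSD matrix Z Zᵀ
    (lam : ℝ) (hlam_ne : lam ≠ 0)
    (hlam_eig : Module.End.HasEigenvalue (Matrix.toLin' (Z * Zᵀ)) lam)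
    (hlam_min : ∀ μ : ℝ, μ ≠ 0 →
      Module.End.HasEigenvalue (Matrix.toLin' (Z * Zᵀ)) μ → lam ≤ μ) :
    (1 / (K : ℝ)) * ∑ k, (∑ i, (x k i) ^ 2)
      ≥ (specNorm (Bperpᵀ * B)) ^ 2 / (K : ℝ) * lam := by
  have hlam_nonneg : 0 ≤ lam := nonneg_of_hasEigenvalue_mul_conjTranspose_self (𝕜 := ℝ) hlam_eig
  have hsum : specNorm (Bperpᵀ * B) ^ 2 * lam ≤ ∑ k, ∑ i, x k i ^ 2 := by
    refine (mul_le_mul_of_nonneg_right (pow_le_pow_left₀ (norm_nonneg _)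
      (specNorm_le_frobenius_norm _) 2) hlam_nonneg).trans ?_
    simpa [conjTranspose_eq_transpose_of_trivial] using
      local_head_lower_bound_spectral_general hB hBstar hcomp hz hx hZ
        (hrank.trans (Fintype.card_fin r).symm) hlam_min
  rw [ge_iff_le, div_mul_eq_mul_div, one_div_mul_eq_div]
  gcongr
end

section
/- Let B, B* ∈ ℝ^{d×r} have orthonormal columns and let B*_⊥ ∈ ℝ^{d×(d−r)} be an orthonormal complement of B*. Let U_ω ≥ 0 and let ω, ω* ∈ ℝ^r satisfy ‖ω‖ ≤ U_ω and ‖ω*‖ ≤ U_ω; set x := B ω − B* ω*. Let A ∈ ℝ^{d×d} satisfy ‖A‖ ≤ 2 and sᵀ A s ≤ −c‖s‖² for all s ∈ ℝ^d, where c > 0. Then ⟨x, B Bᵀ A x⟩ ≤ −c‖x‖² + 4 U_ω ‖B Bᵀ − B* B*ᵀ‖ ‖x‖ + 2 U_ω ‖B*_⊥ᵀ B‖ ‖x‖, where ‖·‖ denotes the spectral norm for matrices and the Euclidean norm for vectors. -/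
open Matrix BigOperators

/-- Euclidean norm of a vector in ℝ^n. -/
noncomputable def euclNorm {n : ℕ} (v : Fin n → ℝ) : ℝ :=
  Real.sqrt (∑ i, (v i) ^ 2)

/-! The projection `P = BBᵀ` is symmetric, so `⟨x, P A x⟩ = ⟨P x, A x⟩ = ⟨x, A x⟩ + ⟨P x - x, A x⟩`.
It fixes `B ω`, and `Q = B*B*ᵀ` fixes `B* ω*`, so for `x = B ω - B* ω*` the defect `P x - x` equals
`(Q - P) (B* ω*)`, whose norm is at most `‖P - Q‖ U_ω`. -/

section Operators

theorem norm_map_sub_sub_self_le {𝕜 E : Type*} [NontriviallyNormedField 𝕜]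
    [SeminormedAddCommGroup E] [NormedSpace 𝕜 E] {P Q : E →L[𝕜] E} {u v : E}
    (hu : P u = u) (hv : Q v = v) :
    ‖P (u - v) - (u - v)‖ ≤ ‖P - Q‖ * ‖v‖ := by
  have defect : P (u - v) - (u - v) = -((P - Q) v) := by
    rw [map_sub, hu, _root_.sub_apply, hv]
    abel
  rw [defect, norm_neg]
  exact (P - Q).le_opNorm v

variable {E : Type*} [SeminormedAddCommGroup E] [InnerProductSpace ℝ E]

theorem inner_map_le_of_isSymmetric {P : E →ₗ[ℝ] E} (hP : P.IsSymmetric) (x y : E) :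
    inner ℝ x (P y) ≤ inner ℝ x y + ‖P x - x‖ * ‖y‖ :=
  calc
    inner ℝ x (P y) = inner ℝ x y + inner ℝ (P x - x) y := by
      rw [← hP x y, inner_sub_left, add_sub_cancel]
    _ ≤ inner ℝ x y + ‖P x - x‖ * ‖y‖ := by
      gcongr
      exact real_inner_le_norm _ _

theorem inner_map_map_sub_le {P Q : E →L[ℝ] E} (hP : (P : E →ₗ[ℝ] E).IsSymmetric) {u v : E}
    (hu : P u = u) (hv : Q v = v) (T : E →L[ℝ] E) :
    inner ℝ (u - v) (P (T (u - v))) ≤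
      inner ℝ (u - v) (T (u - v)) + ‖P - Q‖ * ‖v‖ * (‖T‖ * ‖u - v‖) := by
  refine (inner_map_le_of_isSymmetric hP (u - v) (T (u - v))).trans ?_
  gcongr
  · exact norm_map_sub_sub_self_le hu hv
  · exact T.le_opNorm _

end Operators

section EuclideanNorms

variable {m n : ℕ}

theorem euclNorm_eq_norm_toLp (v : Fin n → ℝ) : euclNorm v = ‖WithLp.toLp 2 v‖ := by
  simp [euclNorm, EuclideanSpace.norm_eq]

theorem euclNorm_nonneg (v : Fin n → ℝ) : 0 ≤ euclNorm v :=
  Real.sqrt_nonneg _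

theorem euclNorm_eq_sqrt_dotProduct (v : Fin n → ℝ) : euclNorm v = √(v ⬝ᵥ v) := by
  simp [euclNorm, dotProduct, sq]

theorem specNorm_nonneg (M : Matrix (Fin m) (Fin n) ℝ) : 0 ≤ specNorm M :=
  norm_nonneg _

theorem specNorm_eq_norm_toEuclideanCLM (M : Matrix (Fin n) (Fin n) ℝ) :
    specNorm M = ‖toEuclideanCLM (𝕜 := ℝ) M‖ :=
  rfl

end EuclideanNorms

section ColumnProjection

theorem mul_transpose_mulVec_mulVec {ι κ R : Type*} [Fintype ι] [Fintype κ] [DecidableEq κ]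
    [Semiring R] {B : Matrix ι κ R} (hB : Bᵀ * B = 1) (v : κ → R) :
    (B * Bᵀ) *ᵥ (B *ᵥ v) = B *ᵥ v := by
  rw [mulVec_mulVec, Matrix.mul_assoc, hB, Matrix.mul_one]

theorem isSymmetric_toEuclideanCLM_mul_transpose {ι κ : Type*} [Fintype ι] [DecidableEq ι]
    [Fintype κ] (B : Matrix ι κ ℝ) :
    (toEuclideanCLM (𝕜 := ℝ) (B * Bᵀ) :
      EuclideanSpace ℝ ι →ₗ[ℝ] EuclideanSpace ℝ ι).IsSymmetric := by
  rw [coe_toEuclideanCLM_eq_toEuclideanLin, isSymmetric_toEuclideanLin_iff]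
  exact isHermitian_mul_conjTranspose_self B

end ColumnProjection

section OrthonormalColumns

variable {d r s : ℕ} {B : Matrix (Fin d) (Fin r) ℝ}

theorem euclNorm_mulVec_of_transpose_mul_self (hB : Bᵀ * B = 1) (v : Fin r → ℝ) :
    euclNorm (B *ᵥ v) = euclNorm v := by
  rw [euclNorm_eq_sqrt_dotProduct, euclNorm_eq_sqrt_dotProduct, dotProduct_mulVec,
    vecMul_mulVec, hB, vecMul_one]

theorem dotProduct_mul_transpose_mul_mulVec_le {C : Matrix (Fin d) (Fin s) ℝ}
    (hB : Bᵀ * B = 1) (hC : Cᵀ * C = 1) (ω : Fin r → ℝ) (η : Fin s → ℝ)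
    {x : Fin d → ℝ} (hx : x = B *ᵥ ω - C *ᵥ η) (A : Matrix (Fin d) (Fin d) ℝ) :
    x ⬝ᵥ (B * Bᵀ * A) *ᵥ x ≤
      x ⬝ᵥ A *ᵥ x + specNorm (B * Bᵀ - C * Cᵀ) * euclNorm η * (specNorm A * euclNorm x) := by
  subst hx
  have fixes_left := congrArg (WithLp.toLp 2) (mul_transpose_mulVec_mulVec hB ω)
  have fixes_right := congrArg (WithLp.toLp 2) (mul_transpose_mulVec_mulVec hC η)
  rw [← toEuclideanCLM_toLp] at fixes_left fixes_right
  have bound := inner_map_map_sub_le (isSymmetric_toEuclideanCLM_mul_transpose B)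
    fixes_left fixes_right (toEuclideanCLM (𝕜 := ℝ) A)
  rw [← WithLp.toLp_sub, ← mul_apply_eq_comp, ← map_mul, ← map_sub,
    inner_toEuclideanCLM, inner_toEuclideanCLM, ← specNorm_eq_norm_toEuclideanCLM,
    ← specNorm_eq_norm_toEuclideanCLM, ← euclNorm_eq_norm_toLp, ← euclNorm_eq_norm_toLp,
    euclNorm_mulVec_of_transpose_mul_self hC] at bound
  exact bound

end OrthonormalColumns

theorem negative_drift_bound_general {d r s : ℕ}
    {B : Matrix (Fin d) (Fin r) ℝ} {Bstar : Matrix (Fin d) (Fin s) ℝ}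
    (hB : Bᵀ * B = 1) (hBstar : Bstarᵀ * Bstar = 1)
    {U : ℝ} (ω : Fin r → ℝ) {ωstar : Fin s → ℝ} (hωstar : euclNorm ωstar ≤ U)
    {x : Fin d → ℝ} (hx : x = B *ᵥ ω - Bstar *ᵥ ωstar)
    {A : Matrix (Fin d) (Fin d) ℝ} {L : ℝ} (hAnorm : specNorm A ≤ L)
    {c : ℝ} (hAneg : x ⬝ᵥ A *ᵥ x ≤ -c * euclNorm x ^ 2) :
    x ⬝ᵥ (B * Bᵀ * A) *ᵥ x ≤
      -c * euclNorm x ^ 2 + L * U * specNorm (B * Bᵀ - Bstar * Bstarᵀ) * euclNorm x := by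
  have hU : 0 ≤ U := (euclNorm_nonneg ωstar).trans hωstar
  have hdiff := specNorm_nonneg (B * Bᵀ - Bstar * Bstarᵀ)
  have hxnorm := euclNorm_nonneg x
  calc
    x ⬝ᵥ (B * Bᵀ * A) *ᵥ x
    _ ≤ x ⬝ᵥ A *ᵥ x +
          specNorm (B * Bᵀ - Bstar * Bstarᵀ) * euclNorm ωstar * (specNorm A * euclNorm x) :=
      dotProduct_mul_transpose_mul_mulVec_le hB hBstar ω ωstar hx A
    _ ≤ -c * euclNorm x ^ 2 +
          specNorm (B * Bᵀ - Bstar * Bstarᵀ) * U * (L * euclNorm x) := by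
      have hA := specNorm_nonneg A
      gcongr
    _ = -c * euclNorm x ^ 2 + L * U * specNorm (B * Bᵀ - Bstar * Bstarᵀ) * euclNorm x := by
      ring

/-- Negative-drift bound for the local head error under heterogeneity:
⟨x, BBᵀAx⟩ ≤ −c‖x‖² + 4U_ω‖BBᵀ−B*B*ᵀ‖‖x‖ + 2U_ω‖B*_⊥ᵀB‖‖x‖. -/
theorem negative_drift_bound
    (d r : ℕ)
    (B Bstar : Matrix (Fin d) (Fin r) ℝ)
    (Bperp : Matrix (Fin d) (Fin (d - r)) ℝ)
    (hB : Bᵀ * B = 1) (hBstar : Bstarᵀ * Bstar = 1)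
    (hBperp : Bperpᵀ * Bperp = 1) (horth : Bstarᵀ * Bperp = 0)
    (hcomp : Bstar * Bstarᵀ + Bperp * Bperpᵀ = 1)
    (Uω : ℝ) (hUω : 0 ≤ Uω)
    (ω ωstar : Fin r → ℝ) (hω : euclNorm ω ≤ Uω) (hωstar : euclNorm ωstar ≤ Uω)
    (x : Fin d → ℝ) (hx : x = B.mulVec ω - Bstar.mulVec ωstar)
    (A : Matrix (Fin d) (Fin d) ℝ) (hAnorm : specNorm A ≤ 2)
    (c : ℝ) (hc : 0 < c)
    (hAneg : ∀ s : Fin d → ℝ, s ⬝ᵥ A.mulVec s ≤ -c * (euclNorm s) ^ 2) :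
    x ⬝ᵥ (B * Bᵀ * A).mulVec x
      ≤ -c * (euclNorm x) ^ 2
        + 4 * Uω * specNorm (B * Bᵀ - Bstar * Bstarᵀ) * euclNorm x
        + 2 * Uω * specNorm (Bperpᵀ * B) * euclNorm x := by
  have slack_nonneg {k l : ℕ} (M : Matrix (Fin k) (Fin l) ℝ) :
      0 ≤ Uω * specNorm M * euclNorm x :=
    mul_nonneg (mul_nonneg hUω (specNorm_nonneg M)) (euclNorm_nonneg x)
  linarith [negative_drift_bound_general hB hBstar ω hωstar hx hAnorm (hAneg x),
    slack_nonneg (B * Bᵀ - Bstar * Bstarᵀ), slack_nonneg (Bperpᵀ * B)]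
end

section
/- Let (Ω, F, P) be a probability space with a filtration (G_ℓ)_{ℓ=0}^{L−1}, L ≥ 1, and let X_0, …, X_{L−1} be ℝ^d-valued random vectors such that X_ℓ is G_ℓ-measurable and ‖X_ℓ‖ ≤ U almost surely for each ℓ, where U ≥ 0. Let m > 0 and ρ ∈ (0,1), and suppose that for all 0 ≤ ℓ < ℓ' ≤ L−1, ‖E[X_{ℓ'} | G_ℓ]‖ ≤ U m ρ^{ℓ'−ℓ} almost surely. Then E‖Σ_{ℓ=0}^{L−1} X_ℓ‖² ≤ U² (1 + 2mρ/(1−ρ)) L, and E‖Σ_{ℓ=0}^{L−1} X_ℓ‖ ≤ (U + U√(2mρ/(1−ρ))) √L. -/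
open MeasureTheory BigOperators

/-! Expanding the square, `‖∑ X ℓ‖²` is a sum over `k` of `‖X k‖² + 2 ∑_{i < k} ⟪X i, X k⟫`. Since
`X i` is `G i`-measurable, `X k` may be replaced by `E[X k | G i]` in the expectation of each cross
term, so that term is at most `U² m ρ ^ (k - i)`. The geometric series then bounds the total
contribution of each `k` by a constant. The first moment follows by Jensen's inequality. -/

open scoped InnerProductSpace

theorem sum_range_pow_sub_le {K : Type*} [Field K] [LinearOrder K] [IsStrictOrderedRing K]
    {x : K} (hx : 0 ≤ x) (hx' : x < 1) (n : ℕ) :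
    ∑ i ∈ Finset.range n, x ^ (n - i) ≤ x / (1 - x) := by
  rw [Finset.range_eq_Ico, Finset.sum_Ico_reflect (x ^ ·) 0 n.le_succ]
  simpa using geom_sum_Ico_le_of_lt_one (m := n + 1 - n) (n := n + 1 - 0) hx hx'

theorem sqrt_one_add_le_one_add_sqrt {x : ℝ} (hx : 0 ≤ x) : √(1 + x) ≤ 1 + √x := by
  rw [Real.sqrt_le_left (by positivity)]
  nlinarith [Real.sq_sqrt hx, Real.sqrt_nonneg x]

theorem norm_sum_range_sq {E : Type*} [SeminormedAddCommGroup E] [InnerProductSpace ℝ E]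
    (x : ℕ → E) (n : ℕ) :
    ‖∑ k ∈ Finset.range n, x k‖ ^ 2
      = ∑ k ∈ Finset.range n, (‖x k‖ ^ 2 + 2 * ∑ i ∈ Finset.range k, ⟪x i, x k⟫_ℝ) := by
  induction n with
  | zero => simp
  | succ n ih =>
    rw [Finset.sum_range_succ, norm_add_sq_real, sum_inner, ih, Finset.sum_range_succ]
    ring

section Moments

variable {Ω E : Type*} {mΩ : MeasurableSpace Ω} {μ : Measure Ω} [NormedAddCommGroup E]

theorem integral_norm_le_sqrt_integral_norm_sq [IsProbabilityMeasure μ] {f : Ω → E}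
    (hf : MemLp f 2 μ) : ∫ ω, ‖f ω‖ ∂μ ≤ √(∫ ω, ‖f ω‖ ^ 2 ∂μ) := by
  have hvar := ProbabilityTheory.variance_nonneg (fun ω ↦ ‖f ω‖) μ
  rw [ProbabilityTheory.variance_eq_sub hf.norm] at hvar
  exact Real.le_sqrt_of_sq_le (sub_nonneg.mp hvar)

theorem integral_norm_sq_le_of_ae_norm_le [IsProbabilityMeasure μ] {f : Ω → E} {C : ℝ}
    (hf : ∀ᵐ ω ∂μ, ‖f ω‖ ≤ C) : ∫ ω, ‖f ω‖ ^ 2 ∂μ ≤ C ^ 2 := by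
  have hsq : ∀ᵐ ω ∂μ, ‖‖f ω‖ ^ 2‖ ≤ C ^ 2 := by
    filter_upwards [hf] with ω hω
    rw [norm_pow, norm_norm]
    gcongr
  simpa using (Real.le_norm_self _).trans (norm_integral_le_of_norm_le_const hsq)

variable [InnerProductSpace ℝ E]

theorem integrable_inner_of_memLp_two {f g : Ω → E} (hf : MemLp f 2 μ) (hg : MemLp g 2 μ) :
    Integrable (fun ω ↦ ⟪f ω, g ω⟫_ℝ) μ :=
  (hf.norm.integrable_mul hg.norm).mono' (hf.1.inner hg.1)
    (ae_of_all _ fun _ ↦ norm_inner_le_norm _ _)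

theorem integral_norm_sum_range_sq {X : ℕ → Ω → E} {n : ℕ} (hX : ∀ k < n, MemLp (X k) 2 μ) :
    ∫ ω, ‖∑ k ∈ Finset.range n, X k ω‖ ^ 2 ∂μ
      = ∑ k ∈ Finset.range n,
          (∫ ω, ‖X k ω‖ ^ 2 ∂μ + 2 * ∑ i ∈ Finset.range k, ∫ ω, ⟪X i ω, X k ω⟫_ℝ ∂μ) := by
  have hsq : ∀ k ∈ Finset.range n, Integrable (fun ω ↦ ‖X k ω‖ ^ 2) μ := fun k hk ↦
    (hX k (Finset.mem_range.mp hk)).integrable_norm_pow two_ne_zero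
  have hinner : ∀ k ∈ Finset.range n, ∀ i ∈ Finset.range k,
      Integrable (fun ω ↦ ⟪X i ω, X k ω⟫_ℝ) μ := by
    intro k hk i hi
    rw [Finset.mem_range] at hk hi
    exact integrable_inner_of_memLp_two (hX i (hi.trans hk)) (hX k hk)
  have hcross : ∀ k ∈ Finset.range n,
      Integrable (fun ω ↦ 2 * ∑ i ∈ Finset.range k, ⟪X i ω, X k ω⟫_ℝ) μ := fun k hk ↦
    (integrable_finsetSum _ (hinner k hk)).const_mul 2
  simp only [norm_sum_range_sq]
  rw [integral_finsetSum _ fun k hk ↦ (hsq k hk).fun_add (hcross k hk)]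
  refine Finset.sum_congr rfl fun k hk ↦ ?_
  rw [integral_add (hsq k hk) (hcross k hk), integral_const_mul,
    integral_finsetSum _ (hinner k hk)]

theorem integral_norm_sum_range_sq_le {X : ℕ → Ω → E} {n : ℕ} {V C : ℝ}
    (hX : ∀ k < n, MemLp (X k) 2 μ) (hV : ∀ k < n, ∫ ω, ‖X k ω‖ ^ 2 ∂μ ≤ V)
    (hC : ∀ k < n, ∑ i ∈ Finset.range k, ∫ ω, ⟪X i ω, X k ω⟫_ℝ ∂μ ≤ C) :
    ∫ ω, ‖∑ k ∈ Finset.range n, X k ω‖ ^ 2 ∂μ ≤ (V + 2 * C) * n := by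
  rw [integral_norm_sum_range_sq hX]
  calc _ ≤ ∑ _k ∈ Finset.range n, (V + 2 * C) := by
        gcongr with k hk
        · exact hV k (Finset.mem_range.mp hk)
        · exact hC k (Finset.mem_range.mp hk)
    _ = (V + 2 * C) * n := by rw [Finset.sum_const, Finset.card_range, nsmul_eq_mul, mul_comm]

theorem integral_inner_le_of_norm_condExp_le [CompleteSpace E] {m : MeasurableSpace Ω}
    (hm : m ≤ mΩ) [SigmaFinite (μ.trim hm)] {f g : Ω → E} {c : ℝ}
    (hfm : AEStronglyMeasurable[m] f μ) (hf : Integrable f μ) (hg : Integrable g μ)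
    (hfg : Integrable (fun ω ↦ ⟪f ω, g ω⟫_ℝ) μ) (hc : ∀ᵐ ω ∂μ, ‖(μ[g | m]) ω‖ ≤ c) :
    ∫ ω, ⟪f ω, g ω⟫_ℝ ∂μ ≤ c * ∫ ω, ‖f ω‖ ∂μ := by
  have pull_out : μ[fun ω ↦ ⟪f ω, g ω⟫_ℝ | m] =ᵐ[μ] fun ω ↦ ⟪f ω, (μ[g | m]) ω⟫_ℝ :=
    condExp_bilin_of_aestronglyMeasurable_left (innerSL ℝ) hfm hfg hg
  rw [← integral_condExp hm, ← integral_const_mul]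
  refine integral_mono_ae integrable_condExp (hf.norm.const_mul c) ?_
  filter_upwards [pull_out, hc] with ω hω hcω
  calc _ = ⟪f ω, (μ[g | m]) ω⟫_ℝ := hω
    _ ≤ ‖f ω‖ * ‖(μ[g | m]) ω‖ := real_inner_le_norm _ _
    _ ≤ c * ‖f ω‖ := by rw [mul_comm]; gcongr

end Moments

section Mixing

variable {Ω E : Type*} {mΩ : MeasurableSpace Ω} {P : Measure Ω} [IsProbabilityMeasure P]
  [NormedAddCommGroup E] [InnerProductSpace ℝ E] [CompleteSpace E] {G : ℕ → MeasurableSpace Ω}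
  {X : ℕ → Ω → E} {U m ρ : ℝ}

theorem sum_range_integral_inner_le_of_geometric_mixing {k : ℕ} (hG : ∀ i < k, G i ≤ mΩ)
    (hU : 0 ≤ U) (hadapted : ∀ i < k, AEStronglyMeasurable[G i] (X i) P)
    (hX : ∀ i ≤ k, MemLp (X i) 2 P) (hX_sq : ∀ i < k, ∫ ω, ‖X i ω‖ ^ 2 ∂P ≤ U ^ 2)
    (hm : 0 ≤ m) (hρ₀ : 0 ≤ ρ) (hρ₁ : ρ < 1)
    (hmix : ∀ i < k, ∀ᵐ ω ∂P, ‖(P[X k | G i]) ω‖ ≤ U * m * ρ ^ (k - i)) :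
    ∑ i ∈ Finset.range k, ∫ ω, ⟪X i ω, X k ω⟫_ℝ ∂P ≤ U ^ 2 * m * (ρ / (1 - ρ)) := by
  have hterm : ∀ i < k, ∫ ω, ⟪X i ω, X k ω⟫_ℝ ∂P ≤ U ^ 2 * m * ρ ^ (k - i) := by
    intro i hi
    have hXi := hX i hi.le
    have hXk := hX k le_rfl
    have hnorm : ∫ ω, ‖X i ω‖ ∂P ≤ U :=
      (integral_norm_le_sqrt_integral_norm_sq hXi).trans (Real.sqrt_le_iff.mpr ⟨hU, hX_sq i hi⟩)
    calc ∫ ω, ⟪X i ω, X k ω⟫_ℝ ∂P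
        ≤ U * m * ρ ^ (k - i) * ∫ ω, ‖X i ω‖ ∂P :=
          integral_inner_le_of_norm_condExp_le (hG i hi) (hadapted i hi)
            (hXi.integrable one_le_two) (hXk.integrable one_le_two)
            (integrable_inner_of_memLp_two hXi hXk) (hmix i hi)
      _ ≤ U * m * ρ ^ (k - i) * U := by gcongr
      _ = U ^ 2 * m * ρ ^ (k - i) := by ring
  calc _ ≤ ∑ i ∈ Finset.range k, U ^ 2 * m * ρ ^ (k - i) :=
        Finset.sum_le_sum fun i hi ↦ hterm i (Finset.mem_range.mp hi)
    _ = U ^ 2 * m * ∑ i ∈ Finset.range k, ρ ^ (k - i) := by rw [Finset.mul_sum]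
    _ ≤ U ^ 2 * m * (ρ / (1 - ρ)) := by gcongr; exact sum_range_pow_sub_le hρ₀ hρ₁ k

theorem local_noise_reduction_general {L : ℕ} (hG : ∀ ℓ < L, G ℓ ≤ mΩ) (hU : 0 ≤ U)
    (hadapted : ∀ ℓ < L, AEStronglyMeasurable[G ℓ] (X ℓ) P)
    (hX : ∀ ℓ < L, MemLp (X ℓ) 2 P) (hX_sq : ∀ ℓ < L, ∫ ω, ‖X ℓ ω‖ ^ 2 ∂P ≤ U ^ 2)
    (hm : 0 ≤ m) (hρ₀ : 0 ≤ ρ) (hρ₁ : ρ < 1)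
    (hmix : ∀ ℓ ℓ' : ℕ, ℓ < ℓ' → ℓ' < L →
      ∀ᵐ ω ∂P, ‖(P[X ℓ' | G ℓ]) ω‖ ≤ U * m * ρ ^ (ℓ' - ℓ)) :
    (∫ ω, ‖∑ ℓ ∈ Finset.range L, X ℓ ω‖ ^ 2 ∂P ≤ U ^ 2 * (1 + 2 * m * ρ / (1 - ρ)) * L)
      ∧ (∫ ω, ‖∑ ℓ ∈ Finset.range L, X ℓ ω‖ ∂P
        ≤ (U + U * √(2 * m * ρ / (1 - ρ))) * √L) := by
  have second_moment :
      ∫ ω, ‖∑ ℓ ∈ Finset.range L, X ℓ ω‖ ^ 2 ∂P ≤ U ^ 2 * (1 + 2 * m * ρ / (1 - ρ)) * L := by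
    convert integral_norm_sum_range_sq_le hX hX_sq fun k hk ↦
      sum_range_integral_inner_le_of_geometric_mixing (fun i hi ↦ hG i (hi.trans hk)) hU
        (fun i hi ↦ hadapted i (hi.trans hk)) (fun i hi ↦ hX i (hi.trans_lt hk))
        (fun i hi ↦ hX_sq i (hi.trans hk)) hm hρ₀ hρ₁ (fun i hi ↦ hmix i k hi hk) using 2
    ring
  refine ⟨second_moment, ?_⟩
  have hκ : 0 ≤ 2 * m * ρ / (1 - ρ) := div_nonneg (by positivity) (sub_nonneg.mpr hρ₁.le)
  have hsum : MemLp (fun ω ↦ ∑ ℓ ∈ Finset.range L, X ℓ ω) 2 P :=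
    memLp_finsetSum _ fun ℓ hℓ ↦ hX ℓ (Finset.mem_range.mp hℓ)
  calc ∫ ω, ‖∑ ℓ ∈ Finset.range L, X ℓ ω‖ ∂P
      ≤ √(∫ ω, ‖∑ ℓ ∈ Finset.range L, X ℓ ω‖ ^ 2 ∂P) :=
        integral_norm_le_sqrt_integral_norm_sq hsum
    _ ≤ √(U ^ 2 * (1 + 2 * m * ρ / (1 - ρ)) * L) := Real.sqrt_le_sqrt second_moment
    _ = U * √(1 + 2 * m * ρ / (1 - ρ)) * √L := by
        rw [Real.sqrt_mul (by positivity), Real.sqrt_mul (sq_nonneg U), Real.sqrt_sq hU]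
    _ ≤ U * (1 + √(2 * m * ρ / (1 - ρ))) * √L := by
        gcongr; exact sqrt_one_add_le_one_add_sqrt hκ
    _ = (U + U * √(2 * m * ρ / (1 - ρ))) * √L := by ring

end Mixing

/-- Local noise reduction: for bounded, geometrically mixing ℝ^d-valued
random vectors, the L-step sum has second moment growing only linearly in L. -/
theorem local_noise_reduction
    {Ω : Type*} {mΩ : MeasurableSpace Ω} (P : Measure Ω) [IsProbabilityMeasure P]
    (d L : ℕ) (hL : 1 ≤ L)
    (G : Filtration ℕ mΩ)
    (X : ℕ → Ω → EuclideanSpace ℝ (Fin d))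
    (U : ℝ) (hU : 0 ≤ U)
    (hadapted : ∀ ℓ, ℓ < L → StronglyMeasurable[G ℓ] (X ℓ))
    (hbdd : ∀ ℓ, ℓ < L → ∀ᵐ ω ∂P, ‖X ℓ ω‖ ≤ U)
    (m ρ : ℝ) (hm : 0 < m) (hρ : ρ ∈ Set.Ioo (0 : ℝ) 1)
    (hmix : ∀ ℓ ℓ' : ℕ, ℓ < ℓ' → ℓ' < L →
      ∀ᵐ ω ∂P, ‖(P[X ℓ' | G ℓ]) ω‖ ≤ U * m * ρ ^ (ℓ' - ℓ)) :
    (∫ ω, ‖∑ ℓ ∈ Finset.range L, X ℓ ω‖ ^ 2 ∂P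
        ≤ U ^ 2 * (1 + 2 * m * ρ / (1 - ρ)) * L)
      ∧ (∫ ω, ‖∑ ℓ ∈ Finset.range L, X ℓ ω‖ ∂P
        ≤ (U + U * Real.sqrt (2 * m * ρ / (1 - ρ))) * Real.sqrt L) := by
  have hmeas (ℓ) (hℓ : ℓ < L) := (hadapted ℓ hℓ).aestronglyMeasurable (μ := P)
  exact local_noise_reduction_general (fun ℓ _ ↦ G.le ℓ) hU hmeas
    (fun ℓ hℓ ↦ .of_bound ((hmeas ℓ hℓ).mono (G.le ℓ)) U (hbdd ℓ hℓ))
    (fun ℓ hℓ ↦ integral_norm_sq_le_of_ae_norm_le (hbdd ℓ hℓ)) hm.le hρ.1.le hρ.2 hmix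
end
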